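/- Fix ω0 ∈ ℝ, σ0² > 0, 0 < σH² < σL², and h ∈ (0,1). Define p(s) := h·φ(s; ω0, σH²+σ0²) / (h·φ(s; ω0, σH²+σ0²) + (1−h)·φ(s; ω0, σL²+σ0²)) and a_H*(s) := (σH²·ω0 + σ0²·s)/(σH² + σ0²). Then lim_{s → ∞} p(s)·a_H*(s) = 0. -/

import Mathlib

open MeasureTheory Real Filter

/-- The Gaussian density with mean `m` and variance `v`. -/
noncomputable def gauss (x m v : ℝ) : ℝ :=
  (Real.sqrt (2 * Real.pi * v))⁻¹ * Real.exp (-(x - m) ^ 2 / (2 * v))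

/-- `p(s)`: the posterior probability of a high-quality source given signal `s`. -/
noncomputable def pHigh (ω0 v0 vH vL h s : ℝ) : ℝ :=
  h * gauss s ω0 (vH + v0) /
    (h * gauss s ω0 (vH + v0) + (1 - h) * gauss s ω0 (vL + v0))

/-! With equal means, the ratio of the narrower Gaussian density to the wider one is a constant
times `exp (-c (x - m) ^ 2)` with `c > 0`, which beats every polynomial. Dividing through by the
wider density writes the posterior as `h r / (h r + (1 - h))` in terms of this ratio `r`, so the
posterior inherits the decay of `r`, while the posterior mean is only affine in the signal. -/

section

open Polynomial Topology

theorem tendsto_eval_mul_exp_neg_mul_sq_cocompact (P : ℝ[X]) {c : ℝ} (hc : 0 < c) :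
    Tendsto (fun x : ℝ ↦ P.eval x * exp (-c * x ^ 2)) (cocompact ℝ) (𝓝 0) := by
  have monomial_decay (n : ℕ) :
      Tendsto (fun x : ℝ ↦ x ^ n * exp (-c * x ^ 2)) (cocompact ℝ) (𝓝 0) := by
    rw [tendsto_zero_iff_abs_tendsto_zero]
    simpa [Function.comp_def, abs_mul, abs_pow] using
      tendsto_rpow_abs_mul_exp_neg_mul_sq_cocompact hc (n : ℝ)
  simpa only [eval_eq_sum_range, Finset.sum_mul, mul_assoc, mul_zero, Finset.sum_const_zero] using
    tendsto_finsetSum (Finset.range (P.natDegree + 1))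
      fun n _ ↦ (monomial_decay n).const_mul (P.coeff n)

theorem tendsto_eval_mul_exp_neg_mul_sub_sq_cocompact (P : ℝ[X]) {c : ℝ} (hc : 0 < c) (m : ℝ) :
    Tendsto (fun x : ℝ ↦ P.eval x * exp (-c * (x - m) ^ 2)) (cocompact ℝ) (𝓝 0) := by
  simpa only [Function.comp_def, Homeomorph.coe_subRight, taylor_eval, sub_add_cancel] using
    (tendsto_eval_mul_exp_neg_mul_sq_cocompact (taylor m P) hc).comp
      (Homeomorph.subRight m).isClosedEmbedding.tendsto_cocompact

theorem gauss_pos (x m : ℝ) {v : ℝ} (hv : 0 < v) : 0 < gauss x m v := by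
  unfold gauss
  positivity

theorem gauss_div_gauss (x m v w : ℝ) :
    gauss x m v / gauss x m w = √w / √v * exp (-((v⁻¹ - w⁻¹) / 2) * (x - m) ^ 2) := by
  have normalization : (√(2 * π * v))⁻¹ / (√(2 * π * w))⁻¹ = √w / √v := by
    have : √(2 * π) ≠ 0 := by positivity
    have hpi : 0 ≤ 2 * π := by positivity
    rw [inv_div_inv, sqrt_mul hpi, sqrt_mul hpi, mul_div_mul_left _ _ this]
  rw [gauss, gauss, mul_div_mul_comm, normalization, ← exp_sub]
  congr 2
  ring

theorem tendsto_eval_mul_gauss_div_gauss_cocompact (P : ℝ[X]) (m : ℝ) {v w : ℝ} (hv : 0 < v)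
    (hvw : v < w) :
    Tendsto (fun x ↦ P.eval x * (gauss x m v / gauss x m w)) (cocompact ℝ) (𝓝 0) := by
  have rate_pos : 0 < (v⁻¹ - w⁻¹) / 2 := half_pos (sub_pos.2 (inv_strictAnti₀ hv hvw))
  simpa only [gauss_div_gauss, mul_left_comm, mul_zero] using
    (tendsto_eval_mul_exp_neg_mul_sub_sq_cocompact P rate_pos m).const_mul (√w / √v)

theorem pHigh_eq_gauss_div_gauss (ω0 v0 vH h s : ℝ) {vL : ℝ} (hL : 0 < vL + v0) :
    pHigh ω0 v0 vH vL h s =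
      h * (gauss s ω0 (vH + v0) / gauss s ω0 (vL + v0)) /
        (h * (gauss s ω0 (vH + v0) / gauss s ω0 (vL + v0)) + (1 - h)) := by
  have hg : gauss s ω0 (vL + v0) ≠ 0 := (gauss_pos s ω0 hL).ne'
  rw [pHigh, ← div_div_div_cancel_right₀ hg, add_div, mul_div_assoc, mul_div_cancel_right₀ _ hg]

theorem stmt_10_general (P : ℝ[X]) (ω0 : ℝ) {v0 vH vL h : ℝ} (hH : 0 < vH + v0) (hHL : vH < vL)
    (hh : h ≠ 1) :
    Tendsto (fun s ↦ pHigh ω0 v0 vH vL h s * P.eval s) (cocompact ℝ) (𝓝 0) := by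
  have hvar : vH + v0 < vL + v0 := by gcongr
  let r (s : ℝ) := gauss s ω0 (vH + v0) / gauss s ω0 (vL + v0)
  have ratio_tendsto : Tendsto r (cocompact ℝ) (𝓝 0) := by
    simpa only [eval_one, one_mul] using tendsto_eval_mul_gauss_div_gauss_cocompact 1 ω0 hH hvar
  have denom_tendsto : Tendsto (fun s ↦ h * r s + (1 - h)) (cocompact ℝ) (𝓝 (1 - h)) := by
    simpa only [mul_zero, zero_add] using (ratio_tendsto.const_mul h).add_const (1 - h)
  have numer_tendsto : Tendsto (fun s ↦ h * (P.eval s * r s)) (cocompact ℝ) (𝓝 0) := by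
    simpa only [mul_zero] using
      (tendsto_eval_mul_gauss_div_gauss_cocompact P ω0 hH hvar).const_mul h
  have quotient_tendsto := numer_tendsto.div denom_tendsto (sub_ne_zero.2 hh.symm)
  rw [zero_div] at quotient_tendsto
  refine quotient_tendsto.congr fun s ↦ ?_
  rw [pHigh_eq_gauss_div_gauss ω0 v0 vH h s (hH.trans hvar), Pi.div_apply]
  ring

end

/-- Lemma A (`lem:normalpHtozero`): the contribution of high-type signals to the posterior
mean vanishes as the signal goes to infinity. -/
theorem stmt_10 (ω0 v0 vH vL h : ℝ) (hv0 : 0 < v0) (hvH : 0 < vH) (hHL : vH < vL)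
    (hh0 : 0 < h) (hh1 : h < 1) :
    Tendsto
      (fun s : ℝ => pHigh ω0 v0 vH vL h s * ((vH * ω0 + v0 * s) / (vH + v0)))
      atTop (nhds 0) := by
  simpa [div_eq_inv_mul] using
    (stmt_10_general (.C (vH + v0)⁻¹ * (.C (vH * ω0) + .C v0 * .X)) ω0 (add_pos hvH hv0) hHL
      hh1.ne).mono_left atTop_le_cocompact
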